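/- arXiv:2202.12708 — 8 statements merged into one kernel-verified Lean document; each statement's English description precedes it below -/
import Mathlib

section
/- Let m₁, m₂, m₃ > 0, let U₁₂, U₂₃, U₃₁ be nonzero real numbers, and let θ₁, θ₂, θ₃ ∈ [0, π], φ₁, φ₂, φ₃ ∈ ℝ satisfy the chain of equalities m₁ m₂ U₁₂ sin θ₁ sin θ₂ sin(φ₁ − φ₂) = m₂ m₃ U₂₃ sin θ₂ sin θ₃ sin(φ₂ − φ₃) = m₃ m₁ U₃₁ sin θ₃ sin θ₁ sin(φ₃ − φ₁). If one of the three products sin θ_i sin θ_j sin(φ_i − φ_j) (for (i,j) = (1,2), (2,3), (3,1)) is zero, then all three are zero, and moreover there exists φ ∈ ℝ such that for each k = 1,2,3 either sin θ_k = 0 or sin(φ_k − φ) = 0 (i.e., the three bodies lie on a common meridian). -/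
open Real

/-
Since the coefficients of the chain are nonzero, one vanishing product makes all three vanish.
If all `sin θ_k` are zero, any meridian will do; otherwise the meridian of a body `j` with
`sin θ_j ≠ 0` contains all the others, because `sin θ_j` cancels from the products involving `j`.
-/

theorem eq_zero_iff_of_mul_eq_mul {M₀ : Type*} [MulZeroClass M₀] [NoZeroDivisors M₀]
    {a b x y : M₀} (ha : a ≠ 0) (hb : b ≠ 0) (h : a * x = b * y) : x = 0 ↔ y = 0 := by
  rw [← mul_eq_zero_iff_left ha, h, mul_eq_zero_iff_left hb]

theorem mul_mul_sin_sub_eq_zero_comm (s t α β : ℝ) :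
    s * t * sin (α - β) = 0 ↔ t * s * sin (β - α) = 0 := by
  rw [← neg_sub β α, sin_neg, mul_neg, neg_eq_zero, mul_comm s t]

theorem exists_forall_eq_zero_or_sin_sub_eq_zero {ι : Type*} {s φ : ι → ℝ}
    (h : Pairwise fun i j => s i * s j * sin (φ i - φ j) = 0) :
    ∃ φ₀, ∀ k, s k = 0 ∨ sin (φ k - φ₀) = 0 := by
  by_cases hs : ∀ k, s k = 0
  · exact ⟨0, fun k => .inl (hs k)⟩
  · obtain ⟨j, hj⟩ := not_forall.mp hs
    refine ⟨φ j, fun k => ?_⟩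
    obtain rfl | hkj := eq_or_ne k j
    · exact .inr (by rw [sub_self, sin_zero])
    · simpa only [mul_eq_zero, hj, or_false] using h hkj

theorem exists_eq_zero_or_sin_sub_eq_zero_three {s₁ s₂ s₃ φ₁ φ₂ φ₃ : ℝ}
    (h₁₂ : s₁ * s₂ * sin (φ₁ - φ₂) = 0) (h₂₃ : s₂ * s₃ * sin (φ₂ - φ₃) = 0)
    (h₃₁ : s₃ * s₁ * sin (φ₃ - φ₁) = 0) :
    ∃ φ : ℝ, (s₁ = 0 ∨ sin (φ₁ - φ) = 0) ∧ (s₂ = 0 ∨ sin (φ₂ - φ) = 0) ∧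
      (s₃ = 0 ∨ sin (φ₃ - φ) = 0) := by
  have h₂₁ := (mul_mul_sin_sub_eq_zero_comm ..).mp h₁₂
  have h₃₂ := (mul_mul_sin_sub_eq_zero_comm ..).mp h₂₃
  have h₁₃ := (mul_mul_sin_sub_eq_zero_comm ..).mp h₃₁
  have h : Pairwise fun i j => ![s₁, s₂, s₃] i * ![s₁, s₂, s₃] j *
      sin (![φ₁, φ₂, φ₃] i - ![φ₁, φ₂, φ₃] j) = 0 := by
    intro i j hij
    fin_cases i <;> fin_cases j <;> first | exact absurd rfl hij | assumption
  obtain ⟨φ, hφ⟩ := exists_forall_eq_zero_or_sin_sub_eq_zero h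
  exact ⟨φ, hφ 0, hφ 1, hφ 2⟩

theorem meridian_of_vanishing_product_general {c₁₂ c₂₃ c₃₁ s₁ s₂ s₃ φ₁ φ₂ φ₃ : ℝ}
    (hc₁₂ : c₁₂ ≠ 0) (hc₂₃ : c₂₃ ≠ 0) (hc₃₁ : c₃₁ ≠ 0)
    (h₁ : c₁₂ * s₁ * s₂ * sin (φ₁ - φ₂) = c₂₃ * s₂ * s₃ * sin (φ₂ - φ₃))
    (h₂ : c₂₃ * s₂ * s₃ * sin (φ₂ - φ₃) = c₃₁ * s₃ * s₁ * sin (φ₃ - φ₁))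
    (hzero : s₁ * s₂ * sin (φ₁ - φ₂) = 0 ∨ s₂ * s₃ * sin (φ₂ - φ₃) = 0 ∨
      s₃ * s₁ * sin (φ₃ - φ₁) = 0) :
    (s₁ * s₂ * sin (φ₁ - φ₂) = 0 ∧ s₂ * s₃ * sin (φ₂ - φ₃) = 0 ∧
      s₃ * s₁ * sin (φ₃ - φ₁) = 0) ∧
    ∃ φ : ℝ, (s₁ = 0 ∨ sin (φ₁ - φ) = 0) ∧ (s₂ = 0 ∨ sin (φ₂ - φ) = 0) ∧
      (s₃ = 0 ∨ sin (φ₃ - φ) = 0) := by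
  have h₁₂_iff_h₂₃ : s₁ * s₂ * sin (φ₁ - φ₂) = 0 ↔ s₂ * s₃ * sin (φ₂ - φ₃) = 0 :=
    eq_zero_iff_of_mul_eq_mul hc₁₂ hc₂₃ (by simpa only [mul_assoc] using h₁)
  have h₂₃_iff_h₃₁ : s₂ * s₃ * sin (φ₂ - φ₃) = 0 ↔ s₃ * s₁ * sin (φ₃ - φ₁) = 0 :=
    eq_zero_iff_of_mul_eq_mul hc₂₃ hc₃₁ (by simpa only [mul_assoc] using h₂)
  have h₃₁ : s₃ * s₁ * sin (φ₃ - φ₁) = 0 := by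
    simpa only [h₁₂_iff_h₂₃, h₂₃_iff_h₃₁, or_self] using hzero
  have h₂₃ := h₂₃_iff_h₃₁.mpr h₃₁
  have h₁₂ := h₁₂_iff_h₂₃.mpr h₂₃
  exact ⟨⟨h₁₂, h₂₃, h₃₁⟩, exists_eq_zero_or_sin_sub_eq_zero_three h₁₂ h₂₃ h₃₁⟩

/-- If in the chain of azimuthal equations of motion one of the products
`sin θ_i sin θ_j sin(φ_i − φ_j)` vanishes, then all three vanish and the three
bodies lie on a common meridian. -/
theorem meridian_of_vanishing_product
    (m₁ m₂ m₃ : ℝ) (hm₁ : 0 < m₁) (hm₂ : 0 < m₂) (hm₃ : 0 < m₃)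
    (U₁₂ U₂₃ U₃₁ : ℝ) (hU₁₂ : U₁₂ ≠ 0) (hU₂₃ : U₂₃ ≠ 0) (hU₃₁ : U₃₁ ≠ 0)
    (θ₁ θ₂ θ₃ : ℝ)
    (hθ₁ : θ₁ ∈ Set.Icc 0 π) (hθ₂ : θ₂ ∈ Set.Icc 0 π) (hθ₃ : θ₃ ∈ Set.Icc 0 π)
    (φ₁ φ₂ φ₃ : ℝ)
    (h₁ : m₁ * m₂ * U₁₂ * sin θ₁ * sin θ₂ * sin (φ₁ - φ₂)
        = m₂ * m₃ * U₂₃ * sin θ₂ * sin θ₃ * sin (φ₂ - φ₃))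
    (h₂ : m₂ * m₃ * U₂₃ * sin θ₂ * sin θ₃ * sin (φ₂ - φ₃)
        = m₃ * m₁ * U₃₁ * sin θ₃ * sin θ₁ * sin (φ₃ - φ₁))
    (hzero : sin θ₁ * sin θ₂ * sin (φ₁ - φ₂) = 0 ∨
             sin θ₂ * sin θ₃ * sin (φ₂ - φ₃) = 0 ∨
             sin θ₃ * sin θ₁ * sin (φ₃ - φ₁) = 0) :
    (sin θ₁ * sin θ₂ * sin (φ₁ - φ₂) = 0 ∧
     sin θ₂ * sin θ₃ * sin (φ₂ - φ₃) = 0 ∧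
     sin θ₃ * sin θ₁ * sin (φ₃ - φ₁) = 0) ∧
    ∃ φ : ℝ,
      (sin θ₁ = 0 ∨ sin (φ₁ - φ) = 0) ∧
      (sin θ₂ = 0 ∨ sin (φ₂ - φ) = 0) ∧
      (sin θ₃ = 0 ∨ sin (φ₃ - φ) = 0) :=
  meridian_of_vanishing_product_general (by positivity) (by positivity) (by positivity) h₁ h₂ hzero
end

section
/- Let m₁, m₂, m₃ > 0, let U₁₂, U₂₃, U₃₁ be real numbers, and let θ₁, θ₂, θ₃ ∈ (0, π), φ₁, φ₂, φ₃ ∈ ℝ with sin θ_k > 0 for all k and sin(φ₁ − φ₂), sin(φ₂ − φ₃), sin(φ₃ − φ₁) all nonzero. Assume the chain of equalities m₁ m₂ U₁₂ sin θ₁ sin θ₂ sin(φ₁ − φ₂) = m₂ m₃ U₂₃ sin θ₂ sin θ₃ sin(φ₂ − φ₃) = m₃ m₁ U₃₁ sin θ₃ sin θ₁ sin(φ₃ − φ₁), and the angular momentum conditions Σ_k m_k sin θ_k cos θ_k cos φ_k = 0 and Σ_k m_k sin θ_k cos θ_k sin φ_k = 0. Then U₁₂ cos θ₃ = U₂₃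 cos θ₁ = U₃₁ cos θ₂. -/
open Real

/-!
Let `v k` be the equatorial projection of the `k`-th body, weighted by its mass, and
`c k = cos (θ k)` its height. With `ω` the area form, the azimuthal equations of motion say that
`ω v₁ v₂ * U₁₂ = ω v₂ v₃ * U₂₃ = ω v₃ v₁ * U₃₁`, and the angular momentum conditions say that
`∑ k, c k • v k = 0`. Pairing this relation with `v₂` gives `ω v₁ v₂ * c₁ = ω v₂ v₃ * c₃`, so
`(U₁₂, U₂₃)` and `(c₁, c₃)` solve the same nontrivial linear equation and are proportional.
-/

attribute [local instance] Complex.finrank_real_complex_fact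

theorem areaForm_circleMap_zero (r s α β : ℝ) :
    Complex.orientation.areaForm (circleMap 0 r α) (circleMap 0 s β) = -(r * s * sin (α - β)) := by
  simp only [Complex.areaForm, Complex.mul_im, Complex.conj_re, Complex.conj_im,
    circleMap_zero_re, circleMap_zero_im, sin_sub]
  ring

theorem smul_circleMap_zero_add_eq_zero {r₁ r₂ r₃ c₁ c₂ c₃ φ₁ φ₂ φ₃ : ℝ}
    (hx : r₁ * c₁ * cos φ₁ + r₂ * c₂ * cos φ₂ + r₃ * c₃ * cos φ₃ = 0)
    (hy : r₁ * c₁ * sin φ₁ + r₂ * c₂ * sin φ₂ + r₃ * c₃ * sin φ₃ = 0) :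
    c₁ • circleMap 0 r₁ φ₁ + c₂ • circleMap 0 r₂ φ₂ + c₃ • circleMap 0 r₃ φ₃ = 0 := by
  apply Complex.ext
  · simp only [Complex.add_re, Complex.smul_re, smul_eq_mul, circleMap_zero_re, Complex.zero_re]
    linear_combination hx
  · simp only [Complex.add_im, Complex.smul_im, smul_eq_mul, circleMap_zero_im, Complex.zero_im]
    linear_combination hy

theorem cross_mul_eq_of_mul_eq_mul {R : Type*} [CommMonoidWithZero R] [IsLeftCancelMulZero R]
    {p q a b c d : R} (hp : p ≠ 0) (hab : p * a = q * b) (hcd : p * c = q * d) :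
    a * d = b * c := by
  refine mul_left_cancel₀ hp ?_
  calc
    p * (a * d) = b * (q * d) := by rw [← mul_assoc, hab, mul_comm q b, mul_assoc]
    _ = p * (b * c) := by rw [← hcd, mul_left_comm]

section AlternatingForm

variable {R M : Type*} [CommRing R] [AddCommGroup M] [Module R M]
  {ω : LinearMap.BilinForm R M} {v₁ v₂ v₃ : M} {c₁ c₂ c₃ U₁₂ U₂₃ U₃₁ : R}

theorem apply_mul_eq_apply_mul_of_smul_add_eq_zero (hω : ω.IsAlt)
    (hv : c₁ • v₁ + c₂ • v₂ + c₃ • v₃ = 0) : ω v₁ v₂ * c₁ = ω v₂ v₃ * c₃ := by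
  have pairing : c₁ * ω v₁ v₂ + c₃ * ω v₃ v₂ = 0 := by
    simpa [hω.self_eq_zero] using congrArg (ω · v₂) hv
  linear_combination pairing + c₃ * hω.neg_eq v₂ v₃

theorem lagrangian_chain_condition_general [NoZeroDivisors R] (hω : ω.IsAlt)
    (h₁₂ : ω v₁ v₂ ≠ 0) (h₂₃ : ω v₂ v₃ ≠ 0)
    (h₁ : ω v₁ v₂ * U₁₂ = ω v₂ v₃ * U₂₃) (h₂ : ω v₂ v₃ * U₂₃ = ω v₃ v₁ * U₃₁)
    (hv : c₁ • v₁ + c₂ • v₂ + c₃ • v₃ = 0) :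
    U₁₂ * c₃ = U₂₃ * c₁ ∧ U₂₃ * c₁ = U₃₁ * c₂ := by
  have hv_rotate : c₂ • v₂ + c₃ • v₃ + c₁ • v₁ = 0 := by rw [← hv]; abel
  exact ⟨cross_mul_eq_of_mul_eq_mul h₁₂ h₁
      (apply_mul_eq_apply_mul_of_smul_add_eq_zero hω hv),
    cross_mul_eq_of_mul_eq_mul h₂₃ h₂
      (apply_mul_eq_apply_mul_of_smul_add_eq_zero hω hv_rotate)⟩

end AlternatingForm

/-- For an extended Lagrangian configuration, the azimuthal equations of motion
together with the vanishing of the `x`- and `y`-components of the angular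
momentum imply `U₁₂ cos θ₃ = U₂₃ cos θ₁ = U₃₁ cos θ₂`. -/
theorem lagrangian_chain_condition
    (m₁ m₂ m₃ : ℝ) (hm₁ : 0 < m₁) (hm₂ : 0 < m₂) (hm₃ : 0 < m₃)
    (U₁₂ U₂₃ U₃₁ : ℝ)
    (θ₁ θ₂ θ₃ : ℝ)
    (hθ₁ : θ₁ ∈ Set.Ioo 0 π) (hθ₂ : θ₂ ∈ Set.Ioo 0 π) (hθ₃ : θ₃ ∈ Set.Ioo 0 π)
    (hs₁ : 0 < sin θ₁) (hs₂ : 0 < sin θ₂) (hs₃ : 0 < sin θ₃)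
    (φ₁ φ₂ φ₃ : ℝ)
    (hφ₁₂ : sin (φ₁ - φ₂) ≠ 0) (hφ₂₃ : sin (φ₂ - φ₃) ≠ 0)
    (hφ₃₁ : sin (φ₃ - φ₁) ≠ 0)
    (h₁ : m₁ * m₂ * U₁₂ * sin θ₁ * sin θ₂ * sin (φ₁ - φ₂)
        = m₂ * m₃ * U₂₃ * sin θ₂ * sin θ₃ * sin (φ₂ - φ₃))
    (h₂ : m₂ * m₃ * U₂₃ * sin θ₂ * sin θ₃ * sin (φ₂ - φ₃)
        = m₃ * m₁ * U₃₁ * sin θ₃ * sin θ₁ * sin (φ₃ - φ₁))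
    (hx : m₁ * sin θ₁ * cos θ₁ * cos φ₁ + m₂ * sin θ₂ * cos θ₂ * cos φ₂
        + m₃ * sin θ₃ * cos θ₃ * cos φ₃ = 0)
    (hy : m₁ * sin θ₁ * cos θ₁ * sin φ₁ + m₂ * sin θ₂ * cos θ₂ * sin φ₂
        + m₃ * sin θ₃ * cos θ₃ * sin φ₃ = 0) :
    U₁₂ * cos θ₃ = U₂₃ * cos θ₁ ∧ U₂₃ * cos θ₁ = U₃₁ * cos θ₂ := by
  refine lagrangian_chain_condition_general (ω := Complex.orientation.areaForm)
    Complex.orientation.areaForm_apply_self ?_ ?_ ?_ ?_ (smul_circleMap_zero_add_eq_zero hx hy)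
    <;> simp only [areaForm_circleMap_zero]
  · simp [hm₁.ne', hm₂.ne', hs₁.ne', hs₂.ne', hφ₁₂]
  · simp [hm₂.ne', hm₃.ne', hs₂.ne', hs₃.ne', hφ₂₃]
  · linear_combination -h₁
  · linear_combination -h₂
end

section
/- Let m₁, m₂, m₃ > 0, θ_k, φ_k ∈ ℝ, γ ∈ ℝ, and assume the angular momentum conditions Σ_k m_k sin θ_k cos θ_k cos φ_k = 0 and Σ_k m_k sin θ_k cos θ_k sin φ_k = 0. Then 2 Σ_{i ∈ {2,3}} m₁ m_i (−γ cos θ₁ cos θ_i) (sin θ₁ cos θ_i − cos θ₁ sin θ_i cos(φ₁ − φ_i)) = −2γ m₁ sin θ₁ cos θ₁ · Σ_{k=1}^{3} m_k cos²θ_k. Consequently, if moreover sin θ₁ cos θ₁ ≠ 0, then the equation −ω² m₁ sin θ₁ cos θ₁ = 2 Σ_{i ∈ {2,3}} m₁ m_i (−γ cos θ₁ cos θ_i)(sin θ₁ cos θ_i − cos θ₁ sin θ_i cos(φ₁ − φ_i)) holds if and only if ω² = 2γ Σ_k m_k cos²θ_k. -/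
/-!
By the addition formula the two angular momentum conditions say
`∑ k, m k * sin (θ k) * cos (θ k) * cos (β - φ k) = 0` for every `β`. After substituting
`U' = -γ cos θᵢ cos θⱼ`, this kills the part of the right-hand side of the equation of motion that
depends on the longitudes, once the sum is extended to all bodies, which is harmless because the
self-interaction term vanishes.
-/

open Real

section

variable {ι : Type*} {s : Finset ι} {m θ φ : ι → ℝ}

theorem sum_mul_cos_sub_eq_zero {a : ι → ℝ} (hx : ∑ k ∈ s, a k * cos (φ k) = 0)
    (hy : ∑ k ∈ s, a k * sin (φ k) = 0) (β : ℝ) : ∑ k ∈ s, a k * cos (β - φ k) = 0 :=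
  calc
    ∑ k ∈ s, a k * cos (β - φ k)
        = cos β * ∑ k ∈ s, a k * cos (φ k) + sin β * ∑ k ∈ s, a k * sin (φ k) := by
      simp only [Finset.mul_sum, ← Finset.sum_add_distrib, cos_sub]
      exact Finset.sum_congr rfl fun k _ => by ring
    _ = 0 := by rw [hx, hy, mul_zero, mul_zero, add_zero]

/-- `μ`, `α`, `β` are the mass, colatitude and longitude of the body acted on. -/
theorem sum_theta_force_eq
    (hx : ∑ k ∈ s, m k * sin (θ k) * cos (θ k) * cos (φ k) = 0)
    (hy : ∑ k ∈ s, m k * sin (θ k) * cos (θ k) * sin (φ k) = 0) (μ α β γ : ℝ) :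
    ∑ k ∈ s, μ * m k * (-γ * cos α * cos (θ k))
        * (sin α * cos (θ k) - cos α * sin (θ k) * cos (β - φ k))
      = -γ * μ * sin α * cos α * ∑ k ∈ s, m k * cos (θ k) ^ 2 :=
  calc
    _ = -γ * μ * sin α * cos α * ∑ k ∈ s, m k * cos (θ k) ^ 2
        + γ * μ * cos α ^ 2 * ∑ k ∈ s, m k * sin (θ k) * cos (θ k) * cos (β - φ k) := by
      simp only [Finset.mul_sum, ← Finset.sum_add_distrib]
      exact Finset.sum_congr rfl fun k _ => by ring
    _ = _ := by rw [sum_mul_cos_sub_eq_zero hx hy β, mul_zero, add_zero]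

theorem sum_erase_theta_force_eq [DecidableEq ι] (i : ι)
    (hx : ∑ k ∈ s, m k * sin (θ k) * cos (θ k) * cos (φ k) = 0)
    (hy : ∑ k ∈ s, m k * sin (θ k) * cos (θ k) * sin (φ k) = 0) (γ : ℝ) :
    ∑ j ∈ s.erase i, m i * m j * (-γ * cos (θ i) * cos (θ j))
        * (sin (θ i) * cos (θ j) - cos (θ i) * sin (θ j) * cos (φ i - φ j))
      = -γ * m i * sin (θ i) * cos (θ i) * ∑ k ∈ s, m k * cos (θ k) ^ 2 := by
  have self_term : m i * m i * (-γ * cos (θ i) * cos (θ i))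
      * (sin (θ i) * cos (θ i) - cos (θ i) * sin (θ i) * cos (φ i - φ i)) = 0 := by
    rw [sub_self, cos_zero]
    ring
  rw [Finset.sum_erase s self_term, sum_theta_force_eq hx hy]

theorem theta1_equation_determines_gamma_general [DecidableEq ι] (i : ι) (hm : m i ≠ 0)
    (hx : ∑ k ∈ s, m k * sin (θ k) * cos (θ k) * cos (φ k) = 0)
    (hy : ∑ k ∈ s, m k * sin (θ k) * cos (θ k) * sin (φ k) = 0) (γ ω : ℝ) :
    (2 * ∑ j ∈ s.erase i, m i * m j * (-γ * cos (θ i) * cos (θ j))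
        * (sin (θ i) * cos (θ j) - cos (θ i) * sin (θ j) * cos (φ i - φ j))
      = -(2 * γ) * m i * sin (θ i) * cos (θ i) * ∑ k ∈ s, m k * cos (θ k) ^ 2) ∧
    (sin (θ i) * cos (θ i) ≠ 0 →
      (-ω ^ 2 * m i * sin (θ i) * cos (θ i)
          = 2 * ∑ j ∈ s.erase i, m i * m j * (-γ * cos (θ i) * cos (θ j))
              * (sin (θ i) * cos (θ j) - cos (θ i) * sin (θ j) * cos (φ i - φ j)) ↔
        ω ^ 2 = 2 * γ * ∑ k ∈ s, m k * cos (θ k) ^ 2)) := by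
  rw [sum_erase_theta_force_eq i hx hy]
  refine ⟨by ring, fun hθ => ?_⟩
  have coeff_ne_zero : -(m i * (sin (θ i) * cos (θ i))) ≠ 0 := neg_ne_zero.mpr (mul_ne_zero hm hθ)
  rw [← mul_right_inj' (b := ω ^ 2) coeff_ne_zero]
  ring_nf

end

/-- With the angular momentum conditions, substituting
`U'(D_{1i}²) = −γ cos θ₁ cos θ_i` into the equation of motion for `θ₁`
collapses it to `−2γ m₁ sin θ₁ cos θ₁ Σ_k m_k cos²θ_k`; consequently, when
`sin θ₁ cos θ₁ ≠ 0` the equation of motion holds iff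
`ω² = 2γ Σ_k m_k cos²θ_k`. -/
theorem theta1_equation_determines_gamma
    (m₁ m₂ m₃ : ℝ) (hm₁ : 0 < m₁) (hm₂ : 0 < m₂) (hm₃ : 0 < m₃)
    (θ₁ θ₂ θ₃ φ₁ φ₂ φ₃ γ ω : ℝ)
    (hx : m₁ * sin θ₁ * cos θ₁ * cos φ₁ + m₂ * sin θ₂ * cos θ₂ * cos φ₂
        + m₃ * sin θ₃ * cos θ₃ * cos φ₃ = 0)
    (hy : m₁ * sin θ₁ * cos θ₁ * sin φ₁ + m₂ * sin θ₂ * cos θ₂ * sin φ₂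
        + m₃ * sin θ₃ * cos θ₃ * sin φ₃ = 0) :
    (2 * (m₁ * m₂ * (-γ * cos θ₁ * cos θ₂)
            * (sin θ₁ * cos θ₂ - cos θ₁ * sin θ₂ * cos (φ₁ - φ₂))
        + m₁ * m₃ * (-γ * cos θ₁ * cos θ₃)
            * (sin θ₁ * cos θ₃ - cos θ₁ * sin θ₃ * cos (φ₁ - φ₃)))
      = -(2 * γ) * m₁ * sin θ₁ * cos θ₁
          * (m₁ * cos θ₁ ^ 2 + m₂ * cos θ₂ ^ 2 + m₃ * cos θ₃ ^ 2)) ∧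
    (sin θ₁ * cos θ₁ ≠ 0 →
      ((-ω ^ 2 * m₁ * sin θ₁ * cos θ₁
          = 2 * (m₁ * m₂ * (-γ * cos θ₁ * cos θ₂)
              * (sin θ₁ * cos θ₂ - cos θ₁ * sin θ₂ * cos (φ₁ - φ₂))
            + m₁ * m₃ * (-γ * cos θ₁ * cos θ₃)
              * (sin θ₁ * cos θ₃ - cos θ₁ * sin θ₃ * cos (φ₁ - φ₃)))) ↔
        ω ^ 2 = 2 * γ * (m₁ * cos θ₁ ^ 2 + m₂ * cos θ₂ ^ 2
          + m₃ * cos θ₃ ^ 2))) := by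
  have univ_erase_zero : Finset.univ.erase (0 : Fin 3) = {1, 2} := rfl
  have h := theta1_equation_determines_gamma_general (s := .univ) (m := ![m₁, m₂, m₃])
    (θ := ![θ₁, θ₂, θ₃]) (φ := ![φ₁, φ₂, φ₃]) 0 hm₁.ne'
    ((Fin.sum_univ_three _).trans hx) ((Fin.sum_univ_three _).trans hy) γ ω
  rwa [univ_erase_zero, Finset.sum_pair (by decide), Fin.sum_univ_three] at h
end

section
/- Let m₁, m₂, m₃ > 0, σ₃₁, σ₂₃ ∈ (0, π), and α ∈ ℝ, and set c₁₂ := cos σ₃₁ cos σ₂₃ + sin σ₃₁ sin σ₂₃ cos α. Place the three bodies at the unit vectors p₁ = (sin σ₃₁, 0, cos σ₃₁), p₂ = (sin σ₂₃ cos α, sin σ₂₃ sin α, cos σ₂₃), p₃ = (0, 0, 1), and let I be the 3×3 inertia matrix I = Σ_k m_k (‖p_k‖² · Id − p_k p_kᵀ). Then the characteristic polynomial of I is det(λ·Id − I) = (λ − (m₁+m₂))(λ − (m₂+m₃))(λ − (m₃+m₁)) − (λ − (m₁+m₂)) m₁ m₂ c₁₂² − (λ − (m₂+m₃)) m₂ m₃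 cos²σ₂₃ − (λ − (m₃+m₁)) m₃ m₁ cos²σ₃₁ + 2 m₁ m₂ m₃ c₁₂ cos σ₂₃ cos σ₃₁. -/
open Real Matrix

/-! Summing `‖p_k‖² Id - p_k p_kᵀ` gives `I = (∑ m_k ‖p_k‖²) Id - Pᵀ D P`, where the rows of `P` are
the positions and `D` is the diagonal matrix of masses. As `Pᵀ (D P)` and `(D P) Pᵀ` have the same
characteristic polynomial up to a power of `X`, that of `I` depends on the positions only through
their Gram matrix `P Pᵀ`, whose entries are given by the spherical law of cosines. -/

section InertiaTensor

variable {R ι n : Type*} [CommRing R] [Fintype ι]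

theorem transpose_mul_diagonal_mul_eq_sum_vecMulVec [DecidableEq ι] (m : ι → R)
    (p : ι → n → R) :
    (of p)ᵀ * (diagonal m * of p) = ∑ k, m k • vecMulVec (p k) (p k) := by
  ext i j
  rw [mul_apply, Matrix.sum_apply]
  refine Finset.sum_congr rfl fun k _ => ?_
  rw [diagonal_mul]
  exact mul_left_comm _ _ _

variable [Fintype n] [DecidableEq n]

/-- The inertia tensor about the origin of point masses `m k` at the positions `p k`. Euclidean
lengths are written as dot products, so that any commutative ring of scalars is allowed. -/
def inertiaTensor (m : ι → R) (p : ι → n → R) : Matrix n n R :=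
  ∑ k, m k • ((p k ⬝ᵥ p k) • 1 - vecMulVec (p k) (p k))

variable [DecidableEq ι]

theorem inertiaTensor_eq_smul_one_sub (m : ι → R) (p : ι → n → R) :
    inertiaTensor m p =
      (∑ k, m k * (p k ⬝ᵥ p k)) • (1 : Matrix n n R) - (of p)ᵀ * (diagonal m * of p) := by
  simp only [inertiaTensor, transpose_mul_diagonal_mul_eq_sum_vecMulVec, smul_sub, smul_smul,
    Finset.sum_sub_distrib, Finset.sum_smul]

theorem det_smul_one_add_mul_comm (h : Fintype.card ι ≤ Fintype.card n)
    (A : Matrix n ι R) (B : Matrix ι n R) (t : R) :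
    (t • (1 : Matrix n n R) + A * B).det =
      t ^ (Fintype.card n - Fintype.card ι) * (t • (1 : Matrix ι ι R) + B * A).det := by
  have eval_eq := congrArg (Polynomial.eval t) (charpoly_mul_comm_of_le (-A) B h)
  simpa [eval_charpoly, smul_one_eq_diagonal] using eval_eq

theorem det_smul_one_sub_inertiaTensor (h : Fintype.card ι ≤ Fintype.card n)
    (m : ι → R) (p : ι → n → R) (lam : R) :
    (lam • (1 : Matrix n n R) - inertiaTensor m p).det =
      (lam - ∑ k, m k * (p k ⬝ᵥ p k)) ^ (Fintype.card n - Fintype.card ι) *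
        ((lam - ∑ k, m k * (p k ⬝ᵥ p k)) • (1 : Matrix ι ι R) +
          diagonal m * (of p * (of p)ᵀ)).det := by
  rw [inertiaTensor_eq_smul_one_sub, ← sub_add, ← sub_smul, det_smul_one_add_mul_comm h,
    Matrix.mul_assoc]

theorem det_smul_one_add_diagonal_mul_of_isSymm (m : Fin 3 → R) {G : Matrix (Fin 3) (Fin 3) R}
    (hG : G.IsSymm) (t : R) :
    (t • (1 : Matrix (Fin 3) (Fin 3) R) + diagonal m * G).det =
      (t + m 0 * G 0 0) * (t + m 1 * G 1 1) * (t + m 2 * G 2 2)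
        - (t + m 2 * G 2 2) * (m 0 * m 1 * G 0 1 ^ 2)
        - (t + m 0 * G 0 0) * (m 1 * m 2 * G 1 2 ^ 2)
        - (t + m 1 * G 1 1) * (m 2 * m 0 * G 0 2 ^ 2)
        + 2 * m 0 * m 1 * m 2 * G 0 1 * G 1 2 * G 0 2 := by
  simp only [det_fin_three, Matrix.add_apply, Matrix.smul_apply, diagonal_mul, smul_eq_mul,
    hG.apply 0 1, hG.apply 0 2, hG.apply 1 2, one_apply_eq, one_apply_ne, ne_eq, Fin.reduceEq,
    zero_ne_one, one_ne_zero, not_false_eq_true]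
  ring

theorem inertia_tensor_charpoly_general (m₁ m₂ m₃ : R) (p₁ p₂ p₃ : Fin 3 → R) (lam : R) :
    (lam • (1 : Matrix (Fin 3) (Fin 3) R) - inertiaTensor ![m₁, m₂, m₃] ![p₁, p₂, p₃]).det =
      (lam - (m₁ * (p₁ ⬝ᵥ p₁) + m₂ * (p₂ ⬝ᵥ p₂))) * (lam - (m₂ * (p₂ ⬝ᵥ p₂) + m₃ * (p₃ ⬝ᵥ p₃)))
          * (lam - (m₃ * (p₃ ⬝ᵥ p₃) + m₁ * (p₁ ⬝ᵥ p₁)))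
        - (lam - (m₁ * (p₁ ⬝ᵥ p₁) + m₂ * (p₂ ⬝ᵥ p₂))) * (m₁ * m₂ * (p₁ ⬝ᵥ p₂) ^ 2)
        - (lam - (m₂ * (p₂ ⬝ᵥ p₂) + m₃ * (p₃ ⬝ᵥ p₃))) * (m₂ * m₃ * (p₂ ⬝ᵥ p₃) ^ 2)
        - (lam - (m₃ * (p₃ ⬝ᵥ p₃) + m₁ * (p₁ ⬝ᵥ p₁))) * (m₃ * m₁ * (p₁ ⬝ᵥ p₃) ^ 2)
        + 2 * m₁ * m₂ * m₃ * (p₁ ⬝ᵥ p₂) * (p₂ ⬝ᵥ p₃) * (p₁ ⬝ᵥ p₃) := by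
  have gram_apply (i j : Fin 3) : (of ![p₁, p₂, p₃] * (of ![p₁, p₂, p₃])ᵀ) i j =
      ![p₁, p₂, p₃] i ⬝ᵥ ![p₁, p₂, p₃] j := rfl
  rw [det_smul_one_sub_inertiaTensor le_rfl,
    det_smul_one_add_diagonal_mul_of_isSymm _ (isSymm_mul_transpose_self _)]
  simp only [gram_apply, Fin.sum_univ_three, Nat.sub_self, pow_zero, one_mul, cons_val]
  ring

end InertiaTensor

/-- The point of the unit sphere at polar angle `θ` from the north pole and azimuth `φ`. -/
noncomputable def spherePoint (θ φ : ℝ) : Fin 3 → ℝ :=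
  ![sin θ * cos φ, sin θ * sin φ, cos θ]

theorem spherePoint_dotProduct_spherePoint (θ φ θ' φ' : ℝ) :
    spherePoint θ φ ⬝ᵥ spherePoint θ' φ' =
      cos θ * cos θ' + sin θ * sin θ' * cos (φ - φ') := by
  simp only [spherePoint, vec3_dotProduct', cos_sub]
  ring

theorem spherePoint_dotProduct_self (θ φ : ℝ) : spherePoint θ φ ⬝ᵥ spherePoint θ φ = 1 := by
  rw [spherePoint_dotProduct_spherePoint, sub_self, cos_zero, mul_one, ← sq, ← sq,
    cos_sq_add_sin_sq]

theorem spherePoint_dotProduct_northPole (θ φ : ℝ) :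
    spherePoint θ φ ⬝ᵥ spherePoint 0 0 = cos θ := by
  simp [spherePoint_dotProduct_spherePoint]

/-- The characteristic polynomial of the inertia tensor of three bodies placed
on the unit sphere at `p₁ = (sin σ₃₁, 0, cos σ₃₁)`,
`p₂ = (sin σ₂₃ cos α, sin σ₂₃ sin α, cos σ₂₃)`, `p₃ = (0,0,1)`, with
`c₁₂ = cos σ₃₁ cos σ₂₃ + sin σ₃₁ sin σ₂₃ cos α`. -/
theorem inertia_tensor_charpoly
    (m₁ m₂ m₃ : ℝ) (hm₁ : 0 < m₁) (hm₂ : 0 < m₂) (hm₃ : 0 < m₃)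
    (σ₃₁ σ₂₃ : ℝ) (hσ₃₁ : σ₃₁ ∈ Set.Ioo 0 π) (hσ₂₃ : σ₂₃ ∈ Set.Ioo 0 π)
    (α : ℝ)
    (c₁₂ : ℝ) (hc₁₂ : c₁₂ = cos σ₃₁ * cos σ₂₃ + sin σ₃₁ * sin σ₂₃ * cos α)
    (p₁ p₂ p₃ : Fin 3 → ℝ)
    (hp₁ : p₁ = ![sin σ₃₁, 0, cos σ₃₁])
    (hp₂ : p₂ = ![sin σ₂₃ * cos α, sin σ₂₃ * sin α, cos σ₂₃])
    (hp₃ : p₃ = ![0, 0, 1])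
    (I : Matrix (Fin 3) (Fin 3) ℝ)
    (hI : I = m₁ • ((∑ i, p₁ i ^ 2) • (1 : Matrix (Fin 3) (Fin 3) ℝ)
                  - vecMulVec p₁ p₁)
            + m₂ • ((∑ i, p₂ i ^ 2) • (1 : Matrix (Fin 3) (Fin 3) ℝ)
                  - vecMulVec p₂ p₂)
            + m₃ • ((∑ i, p₃ i ^ 2) • (1 : Matrix (Fin 3) (Fin 3) ℝ)
                  - vecMulVec p₃ p₃)) :
    ∀ lam : ℝ,
      (lam • (1 : Matrix (Fin 3) (Fin 3) ℝ) - I).det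
        = (lam - (m₁ + m₂)) * (lam - (m₂ + m₃)) * (lam - (m₃ + m₁))
          - (lam - (m₁ + m₂)) * (m₁ * m₂ * c₁₂ ^ 2)
          - (lam - (m₂ + m₃)) * (m₂ * m₃ * cos σ₂₃ ^ 2)
          - (lam - (m₃ + m₁)) * (m₃ * m₁ * cos σ₃₁ ^ 2)
          + 2 * m₁ * m₂ * m₃ * c₁₂ * cos σ₂₃ * cos σ₃₁ := by
  intro lam
  have position₁ : p₁ = spherePoint σ₃₁ 0 := by simp [hp₁, spherePoint]
  have position₂ : p₂ = spherePoint σ₂₃ α := hp₂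
  have position₃ : p₃ = spherePoint 0 0 := by simp [hp₃, spherePoint]
  have tensor : I = inertiaTensor ![m₁, m₂, m₃] ![p₁, p₂, p₃] := by
    simp [hI, inertiaTensor, dotProduct, Fin.sum_univ_three, sq]
  have angle₁₂ : spherePoint σ₃₁ 0 ⬝ᵥ spherePoint σ₂₃ α = c₁₂ := by
    rw [spherePoint_dotProduct_spherePoint, zero_sub, cos_neg, hc₁₂]
  rw [tensor, inertia_tensor_charpoly_general, position₁, position₂, position₃, angle₁₂]
  simp only [spherePoint_dotProduct_self, spherePoint_dotProduct_northPole, mul_one]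
end

section
/- Let m₁, m₂, m₃ > 0 and σ ∈ ℝ with cos σ ≠ 1. Let J be the 3×3 real symmetric matrix with diagonal entries J₁₁ = m₂ + m₃, J₂₂ = m₃ + m₁, J₃₃ = m₁ + m₂ and off-diagonal entries J_ij = −√(m_i m_j) cos σ for i ≠ j. If the vector (√m₁, √m₂, √m₃)ᵀ is an eigenvector of J, i.e., J(√m₁, √m₂, √m₃)ᵀ = λ(√m₁, √m₂, √m₃)ᵀ for some λ ∈ ℝ, then m₁ = m₂ = m₃ and λ = 2m₁(1 − cos σ). In particular, an equilateral triangle on S² is an extended Lagrangian rigid rotator only for equal masses. -/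
open Real Matrix

/-!
Let `M` be the total mass and `c` the common cosine. In row `i` of `J` applied to `(√mⱼ)`, each
off-diagonal entry `-√(mᵢ mⱼ) c` meets `√mⱼ` and yields `-mⱼ c √mᵢ`, so the row equals
`(M - mᵢ) (1 - c) √mᵢ`. An eigenvector thus forces `(M - mᵢ) (1 - c)` to be independent of `i`, and
for `c ≠ 1` so is `mᵢ`.
-/

theorem eq_of_sum_erase_eq {ι M : Type*} [DecidableEq ι] [AddCommMonoid M] [IsCancelAdd M]
    {s : Finset ι} {f : ι → M} {i j : ι} (hi : i ∈ s) (hj : j ∈ s)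
    (h : ∑ k ∈ s.erase i, f k = ∑ k ∈ s.erase j, f k) : f i = f j := by
  refine add_right_cancel (b := ∑ k ∈ s.erase i, f k) ?_
  rw [Finset.add_sum_erase s f hi, h, Finset.add_sum_erase s f hj]

section Inertia

variable {ι : Type*} [Fintype ι] [DecidableEq ι] {m : ι → ℝ}

/-- The matrix `J` representing the inertia tensor of bodies with masses `m i` at unit vectors `q i`
through their mutual distances only: `c i j` is the cosine of the arc angle `σᵢⱼ` from `q i` to
`q j`. If `Q` has columns `√(m i) q i` and `M` is the total mass, then the inertia tensor is
`M - Q Qᵀ` and `J = M - Qᵀ Q`. The diagonal of `c`, which would be `1`, is not read. -/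
noncomputable def shapeInertia (m : ι → ℝ) (c : ι → ι → ℝ) : Matrix ι ι ℝ :=
  of fun i j => if i = j then ∑ k ∈ Finset.univ.erase i, m k else -√(m i * m j) * c i j

theorem shapeInertia_mulVec_sqrt (hm : ∀ i, 0 ≤ m i) (c : ι → ι → ℝ) (i : ι) :
    (shapeInertia m c *ᵥ (Real.sqrt ∘ m)) i =
      (∑ j ∈ Finset.univ.erase i, m j * (1 - c i j)) * √(m i) := by
  have diagonal : shapeInertia m c i i = ∑ j ∈ Finset.univ.erase i, m j := if_pos rfl
  have off_diagonal (j : ι) (hj : j ∈ Finset.univ.erase i) :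
      shapeInertia m c i j * √(m j) = -(m j * c i j) * √(m i) :=
    calc shapeInertia m c i j * √(m j)
        = -√(m i * m j) * c i j * √(m j) := by
          rw [shapeInertia, of_apply, if_neg (Finset.ne_of_mem_erase hj).symm]
      _ = -(√(m j) * √(m j) * c i j) * √(m i) := by rw [sqrt_mul (hm i)]; ring
      _ = -(m j * c i j) * √(m i) := by rw [mul_self_sqrt (hm j)]
  simp only [mulVec, dotProduct, Function.comp_apply]
  rw [← Finset.add_sum_erase _ _ (Finset.mem_univ i), diagonal,
    Finset.sum_congr rfl off_diagonal, ← Finset.sum_mul, ← add_mul, ← Finset.sum_add_distrib]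
  simp only [mul_sub, mul_one, ← sub_eq_add_neg]

theorem shapeInertia_mulVec_sqrt_eq_smul_iff (hm : ∀ i, 0 < m i) (c : ι → ι → ℝ) (lam : ℝ) :
    shapeInertia m c *ᵥ (Real.sqrt ∘ m) = lam • (Real.sqrt ∘ m) ↔
      ∀ i, ∑ j ∈ Finset.univ.erase i, m j * (1 - c i j) = lam := by
  refine funext_iff.trans (forall_congr' fun i => ?_)
  rw [shapeInertia_mulVec_sqrt (fun j => (hm j).le), Pi.smul_apply, smul_eq_mul,
    Function.comp_apply, mul_left_inj' (sqrt_pos.mpr (hm i)).ne']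

theorem shapeInertia_fin_three (m₁ m₂ m₃ : ℝ) (c : Fin 3 → Fin 3 → ℝ) :
    shapeInertia ![m₁, m₂, m₃] c =
      !![m₂ + m₃, -√(m₁ * m₂) * c 0 1, -√(m₁ * m₃) * c 0 2;
         -√(m₂ * m₁) * c 1 0, m₃ + m₁, -√(m₂ * m₃) * c 1 2;
         -√(m₃ * m₁) * c 2 0, -√(m₃ * m₂) * c 2 1, m₁ + m₂] := by
  ext i j
  fin_cases i <;> fin_cases j <;>
    simp [shapeInertia, Finset.sum_erase_eq_sub, Fin.sum_univ_three] <;> ring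

end Inertia

theorem equilateral_needs_equal_masses_general {ι : Type*} [Fintype ι] [DecidableEq ι]
    {m : ι → ℝ} (hm : ∀ i, 0 < m i) {c : ℝ} (hc : c ≠ 1) {lam : ℝ}
    (heig : shapeInertia m (fun _ _ => c) *ᵥ (Real.sqrt ∘ m) = lam • (Real.sqrt ∘ m)) :
    (∀ i j, m i = m j) ∧ ∀ i, lam = (Fintype.card ι - 1) * m i * (1 - c) := by
  have eigenvalue (i : ι) : (∑ j ∈ Finset.univ.erase i, m j) * (1 - c) = lam := by
    rw [Finset.sum_mul]
    exact (shapeInertia_mulVec_sqrt_eq_smul_iff hm _ lam).mp heig i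
  have equal_masses (i j : ι) : m i = m j :=
    eq_of_sum_erase_eq (Finset.mem_univ i) (Finset.mem_univ j) <|
      mul_right_cancel₀ (sub_ne_zero.mpr hc.symm) ((eigenvalue i).trans (eigenvalue j).symm)
  refine ⟨equal_masses, fun i => ?_⟩
  rw [← eigenvalue i, Finset.sum_erase_eq_sub (Finset.mem_univ i),
    Finset.sum_eq_card_nsmul fun j _ => equal_masses j i, Finset.card_univ, nsmul_eq_mul,
    sub_one_mul]

/-- An equilateral triangle on the sphere is an extended Lagrangian rigid
rotator only for equal masses: if `(√m₁, √m₂, √m₃)` is an eigenvector of the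
inertia matrix `J` of an equilateral shape with `cos σ ≠ 1`, then
`m₁ = m₂ = m₃` and the eigenvalue is `2m₁(1 − cos σ)`. -/
theorem equilateral_needs_equal_masses
    (m₁ m₂ m₃ : ℝ) (hm₁ : 0 < m₁) (hm₂ : 0 < m₂) (hm₃ : 0 < m₃)
    (σ : ℝ) (hσ : cos σ ≠ 1)
    (J : Matrix (Fin 3) (Fin 3) ℝ)
    (hJ : J = !![m₂ + m₃, -Real.sqrt (m₁ * m₂) * cos σ,
                   -Real.sqrt (m₁ * m₃) * cos σ;
                 -Real.sqrt (m₂ * m₁) * cos σ, m₃ + m₁,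
                   -Real.sqrt (m₂ * m₃) * cos σ;
                 -Real.sqrt (m₃ * m₁) * cos σ, -Real.sqrt (m₃ * m₂) * cos σ,
                   m₁ + m₂])
    (lam : ℝ)
    (heig : J.mulVec ![Real.sqrt m₁, Real.sqrt m₂, Real.sqrt m₃]
        = lam • ![Real.sqrt m₁, Real.sqrt m₂, Real.sqrt m₃]) :
    m₁ = m₂ ∧ m₂ = m₃ ∧ lam = 2 * m₁ * (1 - cos σ) := by
  have ⟨equal_masses, eigenvalue⟩ := equilateral_needs_equal_masses_general
    (m := ![m₁, m₂, m₃]) (lam := lam) (by simp [Fin.forall_fin_succ, hm₁, hm₂, hm₃]) hσ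
    (by rwa [shapeInertia_fin_three, ← hJ, ← FinVec.map_eq])
  exact ⟨equal_masses 0 1, equal_masses 1 2, (eigenvalue 0).trans (by norm_num)⟩
end

section
/- Define q(σ, σ₁₂) = cos σ (2 sin⁶σ − sin⁶σ₁₂) − sin³σ cos σ₁₂ sin³σ₁₂. For σ ∈ (0, π), the two partial derivatives ∂q/∂σ and ∂q/∂σ₁₂ both vanish at the diagonal point (σ, σ₁₂) = (σ, σ) if and only if cos²σ = 1/10. (Moreover q(σ, σ) = 0 for all σ, so the diagonal lies on the curve q = 0, and these points are the crossing points of the solution curve.) -/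
open Real

/-- The function whose zero set describes the equal-mass isosceles rigid
rotators: `q(σ, σ₁₂) = cos σ (2 sin⁶σ − sin⁶σ₁₂) − sin³σ cos σ₁₂ sin³σ₁₂`. -/
noncomputable def q (σ σ₁₂ : ℝ) : ℝ :=
  Real.cos σ * (2 * Real.sin σ ^ 6 - Real.sin σ₁₂ ^ 6)
    - Real.sin σ ^ 3 * Real.cos σ₁₂ * Real.sin σ₁₂ ^ 3

/-! With `sin² σ = 1 - cos² σ`, the partial derivatives of `q` at `(σ, σ)` are
`± sin⁵ σ * (10 * cos² σ - 1)`; the opposite signs reflect that `q` is constant along the diagonal.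
On `(0, π)` only the second factor can vanish. -/

theorem q_self (σ : ℝ) : q σ σ = 0 := by
  unfold q
  ring

theorem hasDerivAt_q_left (σ σ₁₂ : ℝ) :
    HasDerivAt (fun s => q s σ₁₂)
      (12 * sin σ ^ 5 * cos σ ^ 2 - sin σ * (2 * sin σ ^ 6 - sin σ₁₂ ^ 6)
        - 3 * sin σ ^ 2 * cos σ * cos σ₁₂ * sin σ₁₂ ^ 3) σ := by
  have hsin := hasDerivAt_sin σ
  refine (((hasDerivAt_cos σ).fun_mul
    (((hsin.fun_pow 6).const_mul 2).sub_const (sin σ₁₂ ^ 6))).fun_sub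
      (((hsin.fun_pow 3).mul_const (cos σ₁₂)).mul_const (sin σ₁₂ ^ 3))).congr_deriv ?_
  push_cast
  ring

theorem hasDerivAt_q_right (σ σ₁₂ : ℝ) :
    HasDerivAt (fun t => q σ t)
      (sin σ ^ 3 * sin σ₁₂ ^ 2 * (sin σ₁₂ ^ 2 - 3 * cos σ₁₂ ^ 2)
        - 6 * cos σ * sin σ₁₂ ^ 5 * cos σ₁₂) σ₁₂ := by
  have hsin := hasDerivAt_sin σ₁₂
  refine ((((hsin.fun_pow 6).const_sub (2 * sin σ ^ 6)).const_mul (cos σ)).fun_sub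
    (((hasDerivAt_cos σ₁₂).const_mul (sin σ ^ 3)).fun_mul (hsin.fun_pow 3))).congr_deriv ?_
  push_cast
  ring

theorem deriv_q_left_self (σ : ℝ) :
    deriv (fun s => q s σ) σ = sin σ ^ 5 * (10 * cos σ ^ 2 - 1) := by
  rw [(hasDerivAt_q_left σ σ).deriv]
  linear_combination -sin σ ^ 5 * sin_sq σ

theorem deriv_q_right_self (σ : ℝ) :
    deriv (fun t => q σ t) σ = -(sin σ ^ 5 * (10 * cos σ ^ 2 - 1)) := by
  rw [(hasDerivAt_q_right σ σ).deriv]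
  linear_combination sin σ ^ 5 * sin_sq σ

theorem q_saddle_points_general (σ : ℝ) :
    ((deriv (fun s => q s σ) σ = 0 ∧ deriv (fun t => q σ t) σ = 0) ↔
      sin σ = 0 ∨ cos σ ^ 2 = 1 / 10) ∧
    (∀ s : ℝ, q s s = 0) := by
  have hcos : 10 * cos σ ^ 2 - 1 = 0 ↔ cos σ ^ 2 = 1 / 10 := by
    constructor <;> intro h <;> linarith
  refine ⟨?_, q_self⟩
  rw [deriv_q_left_self, deriv_q_right_self, neg_eq_zero, and_self, mul_eq_zero,
    pow_eq_zero_iff (by norm_num), hcos]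

/-- For `σ ∈ (0, π)`, both partial derivatives of `q` vanish at the diagonal
point `(σ, σ)` iff `cos²σ = 1/10`; moreover `q` vanishes identically on the
diagonal, so these are the crossing points of the solution curve `q = 0`. -/
theorem q_saddle_points (σ : ℝ) (hσ : σ ∈ Set.Ioo 0 π) :
    ((deriv (fun s => q s σ) σ = 0 ∧ deriv (fun t => q σ t) σ = 0) ↔
      cos σ ^ 2 = 1 / 10) ∧
    (∀ s : ℝ, q s s = 0) := by
  simpa only [(sin_pos_of_mem_Ioo hσ).ne', false_or] using q_saddle_points_general σ
end

section
/- Define q(σ, σ₁₂) = cos σ (2 sin⁶σ − sin⁶σ₁₂) − sin³σ cos σ₁₂ sin³σ₁₂. Then for all σ ∈ ℝ, q(σ, 2σ) = −2 sin⁶σ cos σ (32 cos⁶σ + 8 cos⁴σ − 4 cos²σ − 1). Consequently, for σ ∈ (0, π/2), q(σ, 2σ) = 0 if and only if 32 cos⁶σ + 8 cos⁴σ − 4 cos²σ − 1 = 0. -/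
open Real

/-- The function `q(σ, σ₁₂)` whose zeros are the equal-mass isosceles rigid rotators on the sphere
for the cotangent potential; `σ` is the common arc angle `σ₂₃ = σ₃₁` and `σ₁₂` is the base. It is
defined for all real angles, not only those of a spherical triangle. -/
noncomputable def isoscelesRotator (σ σ₁₂ : ℝ) : ℝ :=
  cos σ * (2 * sin σ ^ 6 - sin σ₁₂ ^ 6) - sin σ ^ 3 * cos σ₁₂ * sin σ₁₂ ^ 3

theorem isoscelesRotator_two_mul (σ : ℝ) :
    isoscelesRotator σ (2 * σ) =
      -2 * sin σ ^ 6 * cos σ * (32 * cos σ ^ 6 + 8 * cos σ ^ 4 - 4 * cos σ ^ 2 - 1) := by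
  rw [isoscelesRotator, sin_two_mul, cos_two_mul]
  ring

theorem q_on_boundary_general (σ : ℝ) :
    isoscelesRotator σ (2 * σ) =
        -2 * sin σ ^ 6 * cos σ * (32 * cos σ ^ 6 + 8 * cos σ ^ 4 - 4 * cos σ ^ 2 - 1) ∧
      (isoscelesRotator σ (2 * σ) = 0 ↔
        sin (2 * σ) = 0 ∨ 32 * cos σ ^ 6 + 8 * cos σ ^ 4 - 4 * cos σ ^ 2 - 1 = 0) := by
  have prefactor_eq_zero_iff : -2 * sin σ ^ 6 * cos σ = 0 ↔ sin (2 * σ) = 0 := by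
    simp [sin_two_mul]
  refine ⟨isoscelesRotator_two_mul σ, ?_⟩
  rw [isoscelesRotator_two_mul, mul_eq_zero, prefactor_eq_zero_iff]

/-- On the boundary `σ₁₂ = 2σ` of the triangle region, the equal-mass
isosceles rigid rotator function factors as
`q(σ, 2σ) = −2 sin⁶σ cos σ (32 cos⁶σ + 8 cos⁴σ − 4 cos²σ − 1)`; hence for
`σ ∈ (0, π/2)` the endpoint equation `q(σ, 2σ) = 0` is equivalent to
`32 cos⁶σ + 8 cos⁴σ − 4 cos²σ − 1 = 0`. -/
theorem q_on_boundary :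
    (∀ σ : ℝ,
      cos σ * (2 * sin σ ^ 6 - sin (2 * σ) ^ 6)
          - sin σ ^ 3 * cos (2 * σ) * sin (2 * σ) ^ 3
        = -2 * sin σ ^ 6 * cos σ *
            (32 * cos σ ^ 6 + 8 * cos σ ^ 4 - 4 * cos σ ^ 2 - 1)) ∧
    (∀ σ : ℝ, σ ∈ Set.Ioo 0 (π / 2) →
      (cos σ * (2 * sin σ ^ 6 - sin (2 * σ) ^ 6)
          - sin σ ^ 3 * cos (2 * σ) * sin (2 * σ) ^ 3 = 0 ↔
        32 * cos σ ^ 6 + 8 * cos σ ^ 4 - 4 * cos σ ^ 2 - 1 = 0)) := by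
  refine ⟨fun σ => (q_on_boundary_general σ).1, fun σ ⟨σ_pos, σ_lt⟩ => ?_⟩
  have sin_two_mul_pos : 0 < sin (2 * σ) :=
    sin_pos_of_pos_of_lt_pi (by linarith) (by linarith)
  exact (q_on_boundary_general σ).2.trans (or_iff_right sin_two_mul_pos.ne')
end

section
/- Let σ ∈ ℝ with cos σ ≠ 0, sin σ ≠ 0, and 2 sin³σ cos σ ≠ 1, let ν ∈ ℝ with (1−ν)² + 8ν cos²σ ≥ 0, and let ε ∈ {+1, −1}. If 2 cos σ = sin³σ (1 − ν − ε √((1−ν)² + 8ν cos²σ)), then ν = (cos σ − sin³σ) / (sin³σ (2 sin³σ cos σ − 1)). -/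
/-!
Write `s = sin³σ`, `c = cos σ` and `p = 1 - ν`. Since `(p - ε √(p² + 8νc²)) / 2` is a root of
`X² - pX - 2νc²`, the rigid rotator condition says that `c / s` is such a root. Here the constant
term is divisible by `c²`, so clearing denominators and cancelling one factor `c ≠ 0` leaves an
equation linear in `ν`.
-/

open Real

section CommRing

variable {R : Type*} [CommRing R] [NoZeroDivisors R]

theorem mul_self_eq_of_two_mul_eq_mul_sub [NeZero (2 : R)] {p q r s x : R}
    (hr : r ^ 2 = p ^ 2 + 4 * q) (hx : 2 * x = s * (p - r)) :
    x * x = s * p * x + s ^ 2 * q := by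
  have hsq : (2 * x - s * p) ^ 2 = s ^ 2 * (p ^ 2 + 4 * q) := by
    rw [hx, ← hr]; ring
  exact mul_left_cancel₀ (mul_ne_zero two_ne_zero two_ne_zero) (by linear_combination hsq)

theorem mass_ratio_mul_eq_sub {s c ν : R} (hc : c ≠ 0)
    (h : c * c = s * (1 - ν) * c + s ^ 2 * (2 * ν * c ^ 2)) :
    ν * (s * (2 * s * c - 1)) = c - s :=
  mul_left_cancel₀ hc (by linear_combination -h)

end CommRing

theorem mass_ratio_formula_general {K : Type*} [Field K] [NeZero (2 : K)] {s c ν r : K}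
    (hc : c ≠ 0) (hden : 2 * s * c ≠ 1) (hr : r ^ 2 = (1 - ν) ^ 2 + 8 * ν * c ^ 2)
    (heq : 2 * c = s * (1 - ν - r)) :
    ν = (c - s) / (s * (2 * s * c - 1)) := by
  have hs : s ≠ 0 := left_ne_zero_of_mul (heq ▸ mul_ne_zero two_ne_zero hc)
  have hquad : c * c = s * (1 - ν) * c + s ^ 2 * (2 * ν * c ^ 2) :=
    mul_self_eq_of_two_mul_eq_mul_sub (by rw [hr]; ring) heq
  rw [eq_div_iff (mul_ne_zero hs (sub_ne_zero.mpr hden))]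
  exact mass_ratio_mul_eq_sub hc hquad

/-- Solving the rigid rotator condition
`2 cos σ = sin³σ (1 − ν − ε √((1−ν)² + 8ν cos²σ))` for the mass ratio `ν`
gives `ν = (cos σ − sin³σ) / (sin³σ (2 sin³σ cos σ − 1))`. -/
theorem mass_ratio_formula
    (σ ν ε : ℝ)
    (hcos : cos σ ≠ 0) (hsin : sin σ ≠ 0)
    (hden : 2 * sin σ ^ 3 * cos σ ≠ 1)
    (hdisc : 0 ≤ (1 - ν) ^ 2 + 8 * ν * cos σ ^ 2)
    (hε : ε = 1 ∨ ε = -1)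
    (heq : 2 * cos σ
        = sin σ ^ 3 *
            (1 - ν - ε * Real.sqrt ((1 - ν) ^ 2 + 8 * ν * cos σ ^ 2))) :
    ν = (cos σ - sin σ ^ 3)
        / (sin σ ^ 3 * (2 * sin σ ^ 3 * cos σ - 1)) := by
  have hε_sq : ε ^ 2 = 1 := sq_eq_one_iff.mpr hε
  exact mass_ratio_formula_general hcos hden (by rw [mul_pow, hε_sq, one_mul, sq_sqrt hdisc]) heq
end
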